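/- For each sign ε ∈ {+1, −1}, the partial derivatives of the potential Ψ_ε on {r > r₊, 0 < θ < π} are given by ∂Ψ_ε/∂r = (2rΔ − (r−m)ρ² + 2εar√Δ sin θ) / (√Δ sin θ (r² + a² + εa√Δ sin θ)²) and ∂Ψ_ε/∂θ = (ρ² + 2a² sin²θ + 2εa√Δ sin θ)√Δ cos θ / (sin²θ (r² + a² + εa√Δ sin θ)²). -/

import Mathlib

noncomputable section

open Real

/-- Δ = r² − 2mr + a² + q² -/
def Delta (m a q r : ℝ) : ℝ := r ^ 2 - 2 * m * r + a ^ 2 + q ^ 2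

/-- ρ² = r² + a² cos²θ -/
def rhoSq (a r θ : ℝ) : ℝ := r ^ 2 + a ^ 2 * Real.cos θ ^ 2

/-- r₊ = m + √(m² − a² − q²) -/
def rPlus (m a q : ℝ) : ℝ := m + Real.sqrt (m ^ 2 - a ^ 2 - q ^ 2)

/-- The potential Ψ_ε(r,θ) = (−1/sin θ − ε a/√Δ) / ((r² + a²)/√Δ + ε a sin θ). -/
def Psi (m a q ε r θ : ℝ) : ℝ :=
  (-1 / Real.sin θ - ε * a / Real.sqrt (Delta m a q r)) /
    ((r ^ 2 + a ^ 2) / Real.sqrt (Delta m a q r) + ε * a * Real.sin θ)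

/-!
Clearing the inner fractions gives `Ψ_ε = -(√Δ + ε a sin θ) / (sin θ * D)` with
`D = r² + a² + ε a √Δ sin θ`, and both formulas are then the quotient rule together with
`(√Δ)' = (r - m) / √Δ`, where `ε² = 1` turns `r² + a² - (ε a sin θ)²` into `ρ²`.
On the domain of outer communication `q² < 2 m r`, that is `Δ < r² + a²`; since also
`a² ≤ r² + a²`, this forces `|a| √Δ < r² + a²`, so `D` is positive.
-/

section

variable {m a q ε r θ : ℝ}

lemma Delta_pos_of_rPlus_lt (hr : rPlus m a q < r) : 0 < Delta m a q r := by
  have hsq : m ^ 2 - a ^ 2 - q ^ 2 < (r - m) ^ 2 :=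
    lt_sq_of_sqrt_lt (lt_sub_iff_add_lt'.2 hr)
  unfold Delta
  linarith

lemma lt_of_rPlus_lt (hr : rPlus m a q < r) : m < r :=
  (le_add_of_nonneg_right (sqrt_nonneg _)).trans_lt hr

lemma sq_lt_two_mul_of_rPlus_lt (hm : 0 < m) (hmaq : a ^ 2 + q ^ 2 ≤ m ^ 2)
    (hr : rPlus m a q < r) : q ^ 2 < 2 * m * r := by
  have hmr : m * m < m * r := mul_lt_mul_of_pos_left (lt_of_rPlus_lt hr) hm
  linarith [sq_nonneg a, mul_pos hm hm, sq m]

lemma Delta_lt_sq_add_sq (hq : q ^ 2 < 2 * m * r) : Delta m a q r < r ^ 2 + a ^ 2 := by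
  unfold Delta
  linarith

lemma abs_mul_sqrt_Delta_lt (hq : q ^ 2 < 2 * m * r) :
    |a| * √(Delta m a q r) < r ^ 2 + a ^ 2 := by
  have hr : r ≠ 0 := by
    rintro rfl
    exact (sq_nonneg q).not_gt (by simpa using hq)
  have hR : 0 < r ^ 2 + a ^ 2 := by positivity
  calc |a| * √(Delta m a q r)
      ≤ √(r ^ 2 + a ^ 2) * √(Delta m a q r) := by
        gcongr
        exact abs_le_sqrt (le_add_of_nonneg_left (sq_nonneg r))
    _ < √(r ^ 2 + a ^ 2) * √(r ^ 2 + a ^ 2) := by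
        have hΔ := (sqrt_lt_sqrt_iff_of_pos hR).2 (Delta_lt_sq_add_sq (a := a) hq)
        gcongr
    _ = r ^ 2 + a ^ 2 := mul_self_sqrt hR.le

lemma sq_add_sq_add_mul_sin_pos (hq : q ^ 2 < 2 * m * r) (hε : |ε| ≤ 1) (θ : ℝ) :
    0 < r ^ 2 + a ^ 2 + ε * a * √(Delta m a q r) * sin θ := by
  have habs : |ε * a * √(Delta m a q r) * sin θ| ≤ |a| * √(Delta m a q r) :=
    calc |ε * a * √(Delta m a q r) * sin θ|
        = |ε| * (|a| * √(Delta m a q r)) * |sin θ| := by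
          rw [abs_mul, abs_mul, abs_mul, abs_of_nonneg (sqrt_nonneg _), mul_assoc |ε|]
      _ ≤ 1 * (|a| * √(Delta m a q r)) * 1 := by
          gcongr
          exact abs_sin_le_one θ
      _ = |a| * √(Delta m a q r) := by ring
  linarith [neg_abs_le (ε * a * √(Delta m a q r) * sin θ), abs_mul_sqrt_Delta_lt (a := a) hq]

lemma rhoSq_eq_of_sq_eq_one (hε : ε ^ 2 = 1) :
    rhoSq a r θ = r ^ 2 + a ^ 2 - (ε * a * sin θ) ^ 2 := by
  rw [rhoSq, cos_sq', mul_pow, mul_pow, hε]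
  ring

lemma Psi_eq_div (hΔ : 0 < Delta m a q r) (hθ : sin θ ≠ 0) :
    Psi m a q ε r θ = -(√(Delta m a q r) + ε * a * sin θ) /
      (sin θ * (r ^ 2 + a ^ 2 + ε * a * √(Delta m a q r) * sin θ)) := by
  have hw : √(Delta m a q r) ≠ 0 := (sqrt_pos.2 hΔ).ne'
  rw [Psi, ← mul_div_mul_right _ _ (mul_ne_zero hθ hw)]
  congr 1
  · field_simp
    ring
  · field_simp

lemma hasDerivAt_Delta (m a q r : ℝ) : HasDerivAt (Delta m a q) (2 * (r - m)) r := by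
  change HasDerivAt (fun r' => r' ^ 2 - 2 * m * r' + a ^ 2 + q ^ 2) _ r
  simpa [mul_sub] using (hasDerivAt_pow 2 r).fun_sub ((hasDerivAt_id' r).const_mul (2 * m))

lemma eventually_Delta_pos (hΔ : 0 < Delta m a q r) : ∀ᶠ r' in nhds r, 0 < Delta m a q r' :=
  (hasDerivAt_Delta m a q r).continuousAt.eventually_const_lt hΔ

lemma hasDerivAt_sqrt_Delta (hΔ : 0 < Delta m a q r) :
    HasDerivAt (fun r' => √(Delta m a q r')) ((r - m) / √(Delta m a q r)) r :=
  ((hasDerivAt_Delta m a q r).sqrt hΔ.ne').congr_deriv (mul_div_mul_left _ _ two_ne_zero)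

lemma hasDerivAt_Psi_radial (hΔ : 0 < Delta m a q r) (hθ : sin θ ≠ 0)
    (hD : r ^ 2 + a ^ 2 + ε * a * √(Delta m a q r) * sin θ ≠ 0) :
    HasDerivAt (fun r' => Psi m a q ε r' θ)
      ((2 * r * Delta m a q r - (r - m) * (r ^ 2 + a ^ 2 - (ε * a * sin θ) ^ 2)
          + 2 * ε * a * r * √(Delta m a q r) * sin θ) /
        (√(Delta m a q r) * sin θ *
          (r ^ 2 + a ^ 2 + ε * a * √(Delta m a q r) * sin θ) ^ 2)) r := by
  have hw : √(Delta m a q r) ≠ 0 := (sqrt_pos.2 hΔ).ne'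
  have hw_sq : √(Delta m a q r) ^ 2 = Delta m a q r := sq_sqrt hΔ.le
  have hquot : (fun r' => Psi m a q ε r' θ) =ᶠ[nhds r] fun r' =>
      -(√(Delta m a q r') + ε * a * sin θ) /
        (sin θ * (r' ^ 2 + a ^ 2 + ε * a * √(Delta m a q r') * sin θ)) :=
    (eventually_Delta_pos hΔ).mono fun _ hr' => Psi_eq_div hr' hθ
  have hdw := hasDerivAt_sqrt_Delta hΔ
  have hnum := (hdw.add_const (ε * a * sin θ)).fun_neg
  have hden := (((hasDerivAt_pow 2 r).add_const (a ^ 2)).fun_add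
    ((hdw.const_mul (ε * a)).mul_const (sin θ))).const_mul (sin θ)
  refine ((hnum.fun_div hden (mul_ne_zero hθ hD)).congr_of_eventuallyEq hquot).congr_deriv ?_
  rw [← hw_sq, sqrt_sq (sqrt_nonneg _)]
  field_simp
  ring

lemma hasDerivAt_Psi_polar (hΔ : 0 < Delta m a q r) (hθ : sin θ ≠ 0)
    (hD : r ^ 2 + a ^ 2 + ε * a * √(Delta m a q r) * sin θ ≠ 0) :
    HasDerivAt (fun θ' => Psi m a q ε r θ')
      ((r ^ 2 + a ^ 2 + (ε * a * sin θ) ^ 2 + 2 * ε * a * √(Delta m a q r) * sin θ) *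
          √(Delta m a q r) * cos θ /
        (sin θ ^ 2 *
          (r ^ 2 + a ^ 2 + ε * a * √(Delta m a q r) * sin θ) ^ 2)) θ := by
  have hquot : (fun θ' => Psi m a q ε r θ') =ᶠ[nhds θ] fun θ' =>
      -(√(Delta m a q r) + ε * a * sin θ') /
        (sin θ' * (r ^ 2 + a ^ 2 + ε * a * √(Delta m a q r) * sin θ')) :=
    (continuous_sin.continuousAt.eventually_ne hθ).mono fun _ hθ' => Psi_eq_div hΔ hθ'
  have hdsin := hasDerivAt_sin θ
  have hnum := ((hdsin.const_mul (ε * a)).const_add √(Delta m a q r)).fun_neg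
  have hden := hdsin.fun_mul
    ((hdsin.const_mul (ε * a * √(Delta m a q r))).const_add (r ^ 2 + a ^ 2))
  refine ((hnum.fun_div hden (mul_ne_zero hθ hD)).congr_of_eventuallyEq hquot).congr_deriv ?_
  rw [mul_pow (sin θ)]
  ring

end

theorem psi_partial_derivatives_general {m a q ε r θ : ℝ} (hε : ε ^ 2 = 1)
    (hΔ : 0 < Delta m a q r) (hθ : sin θ ≠ 0)
    (hD : r ^ 2 + a ^ 2 + ε * a * √(Delta m a q r) * sin θ ≠ 0) :
    HasDerivAt (fun r' => Psi m a q ε r' θ)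
      ((2 * r * Delta m a q r - (r - m) * rhoSq a r θ
          + 2 * ε * a * r * √(Delta m a q r) * sin θ) /
        (√(Delta m a q r) * sin θ *
          (r ^ 2 + a ^ 2 + ε * a * √(Delta m a q r) * sin θ) ^ 2)) r ∧
    HasDerivAt (fun θ' => Psi m a q ε r θ')
      ((rhoSq a r θ + 2 * a ^ 2 * sin θ ^ 2 + 2 * ε * a * √(Delta m a q r) * sin θ) *
          √(Delta m a q r) * cos θ /
        (sin θ ^ 2 *
          (r ^ 2 + a ^ 2 + ε * a * √(Delta m a q r) * sin θ) ^ 2)) θ := by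
  have hpolar : rhoSq a r θ + 2 * a ^ 2 * sin θ ^ 2 = r ^ 2 + a ^ 2 + (ε * a * sin θ) ^ 2 := by
    rw [rhoSq_eq_of_sq_eq_one hε, mul_pow, mul_pow, hε]
    ring
  rw [hpolar, rhoSq_eq_of_sq_eq_one hε]
  exact ⟨hasDerivAt_Psi_radial hΔ hθ hD, hasDerivAt_Psi_polar hΔ hθ hD⟩

theorem psi_partial_derivatives (m a q : ℝ) (hm : 0 < m) (ha : 0 ≤ a)
    (hmaq : a ^ 2 + q ^ 2 ≤ m ^ 2) (ε : ℝ) (hε : ε = 1 ∨ ε = -1)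
    (r θ : ℝ) (hr : rPlus m a q < r) (hθ0 : 0 < θ) (hθπ : θ < π) :
    deriv (fun r' => Psi m a q ε r' θ) r =
      (2 * r * Delta m a q r - (r - m) * rhoSq a r θ
          + 2 * ε * a * r * Real.sqrt (Delta m a q r) * Real.sin θ) /
        (Real.sqrt (Delta m a q r) * Real.sin θ *
          (r ^ 2 + a ^ 2 + ε * a * Real.sqrt (Delta m a q r) * Real.sin θ) ^ 2) ∧
    deriv (fun θ' => Psi m a q ε r θ') θ =
      (rhoSq a r θ + 2 * a ^ 2 * Real.sin θ ^ 2
          + 2 * ε * a * Real.sqrt (Delta m a q r) * Real.sin θ) *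
        Real.sqrt (Delta m a q r) * Real.cos θ /
        (Real.sin θ ^ 2 *
          (r ^ 2 + a ^ 2 + ε * a * Real.sqrt (Delta m a q r) * Real.sin θ) ^ 2) := by
  have hε_abs : |ε| ≤ 1 := by rcases hε with rfl | rfl <;> simp
  have hD := sq_add_sq_add_mul_sin_pos (a := a) (sq_lt_two_mul_of_rPlus_lt hm hmaq hr) hε_abs θ
  have hPsi := psi_partial_derivatives_general (sq_eq_one_iff.2 hε)
    (Delta_pos_of_rPlus_lt hr) (sin_pos_of_pos_of_lt_pi hθ0 hθπ).ne' hD.ne'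
  exact ⟨hPsi.1.deriv, hPsi.2.deriv⟩
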